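/- Let Γ be a countable group with Property (Fab) such that either Γ is torsion-free, or Γ is icc (Γ ≠ {e} and every conjugacy class of Γ other than {e} is infinite). Then for every normalised multiplier ζ ∈ Z²(Γ,T), the group Γ has a ζ-representation which is both irreducible and projectively faithful. -/

import Mathlib

/-- A projective unitary representation: a map into the unitary operators sending `1` to `id`
whose composition with the quotient by the circle is a homomorphism. -/
def IsProjUnitaryRep {G : Type*} [Group G] {H : Type*} [NormedAddCommGroup H]
    [InnerProductSpace ℂ H] [CompleteSpace H] (π : G → (H →L[ℂ] H)) : Prop :=
  (∀ x, π x ∈ unitary (H →L[ℂ] H)) ∧ π 1 = 1 ∧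
    ∀ x y, ∃ z : Circle, π x * π y = (z : ℂ) • π (x * y)

/-- The projective kernel of a projective representation. -/
def ProjKer {G : Type*} [Group G] {H : Type*} [NormedAddCommGroup H]
    [InnerProductSpace ℂ H] [CompleteSpace H] (π : G → (H →L[ℂ] H)) : Set G :=
  {x | ∃ z : Circle, π x = (z : ℂ) • (1 : H →L[ℂ] H)}

/-- Projective faithfulness. -/
def PFaithful {G : Type*} [Group G] {H : Type*} [NormedAddCommGroup H]
    [InnerProductSpace ℂ H] [CompleteSpace H] (π : G → (H →L[ℂ] H)) : Prop :=
  ∀ x, x ∈ ProjKer π → x = 1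

/-- Irreducibility: the only closed invariant subspaces are `⊥` and `⊤`. -/
def IsIrreducibleRep {G : Type*} {H : Type*} [NormedAddCommGroup H]
    [InnerProductSpace ℂ H] [CompleteSpace H] (π : G → (H →L[ℂ] H)) : Prop :=
  ∀ K : Submodule ℂ H, IsClosed (K : Set H) → (∀ x, ∀ v ∈ K, π x v ∈ K) → K = ⊥ ∨ K = ⊤

/-- An (ordinary) unitary representation. -/
def IsUnitaryRep {G : Type*} [Group G] {H : Type*} [NormedAddCommGroup H]
    [InnerProductSpace ℂ H] [CompleteSpace H] (π : G → (H →L[ℂ] H)) : Prop :=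
  (∀ x, π x ∈ unitary (H →L[ℂ] H)) ∧ π 1 = 1 ∧ ∀ x y, π (x * y) = π x * π y

/-- A multiplier (2-cocycle) with values in the circle group. -/
def IsMultiplier {G : Type*} [Group G] (ζ : G → G → Circle) : Prop :=
  (∀ x, ζ 1 x = 1) ∧ (∀ x, ζ x 1 = 1) ∧
    ∀ x y z, ζ x y * ζ (x * y) z = ζ x (y * z) * ζ y z

/-- A normalised multiplier. -/
def IsNormalised {G : Type*} [Group G] (ζ : G → G → Circle) : Prop :=
  ∀ x : G, ζ x x⁻¹ = 1

/-- A ζ-representation of `G`. -/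
def IsZetaRep {G : Type*} [Group G] {H : Type*} [NormedAddCommGroup H]
    [InnerProductSpace ℂ H] [CompleteSpace H] (ζ : G → G → Circle)
    (π : G → (H →L[ℂ] H)) : Prop :=
  (∀ x, π x ∈ unitary (H →L[ℂ] H)) ∧ π 1 = 1 ∧
    ∀ x y, π x * π y = ((ζ x y : ℂ)) • π (x * y)

/-- A ζ-representation of a subgroup `N` of `G` (with respect to the restriction of ζ). -/
def IsZetaRepOn {G : Type*} [Group G] {H : Type*} [NormedAddCommGroup H]
    [InnerProductSpace ℂ H] [CompleteSpace H] (ζ : G → G → Circle) (N : Subgroup G)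
    (σ : N → (H →L[ℂ] H)) : Prop :=
  (∀ x, σ x ∈ unitary (H →L[ℂ] H)) ∧ σ 1 = 1 ∧
    ∀ x y : N, σ x * σ y = ((ζ (x : G) (y : G) : ℂ)) • σ (x * y)

open scoped Classical in
/-- The conjugate `σ^γ` of a projective representation `σ` of a (normal) subgroup `N`:
`σ^γ(x) = ζ(γ,x)·ζ(γx,γ⁻¹)·σ(γxγ⁻¹)`. -/
noncomputable def conjRep {G : Type*} [Group G] {H : Type*} [NormedAddCommGroup H]
    [InnerProductSpace ℂ H] [CompleteSpace H] (ζ : G → G → Circle) (N : Subgroup G)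
    (σ : N → (H →L[ℂ] H)) (γ : G) (x : N) : H →L[ℂ] H :=
  if h : γ * (x : G) * γ⁻¹ ∈ N then
    ((ζ γ (x : G) : ℂ) * (ζ (γ * (x : G)) γ⁻¹ : ℂ)) • σ ⟨γ * (x : G) * γ⁻¹, h⟩
  else 1

/-- `σ` is Γ-P-faithful: the projective Γ-kernel
`{x ∈ N : ∃ z ∈ T, σ^γ(x) = z·id for all γ}` is trivial. -/
def GammaPFaithful {G : Type*} [Group G] {H : Type*} [NormedAddCommGroup H]
    [InnerProductSpace ℂ H] [CompleteSpace H] (ζ : G → G → Circle) (N : Subgroup G)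
    (σ : N → (H →L[ℂ] H)) : Prop :=
  ∀ x : N, (∃ z : Circle, ∀ γ : G, conjRep ζ N σ γ x = (z : ℂ) • (1 : H →L[ℂ] H)) → x = 1

/-- A finite foot of `G`: a finite minimal (nontrivial) normal subgroup. -/
def IsFiniteFoot {G : Type*} [Group G] (N : Subgroup G) : Prop :=
  N.Normal ∧ N ≠ ⊥ ∧ (∀ M : Subgroup G, M.Normal → M ≠ ⊥ → M ≤ N → M = N) ∧ Finite N

/-- The minisocle: the subgroup generated by all finite feet. -/
def minisocle (G : Type*) [Group G] : Subgroup G :=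
  ⨆ (N : Subgroup G) (_ : IsFiniteFoot N), N

/-- Property (Fab): the normal subgroup generated by any single conjugacy class has finite
abelianisation. -/
def PropertyFab (G : Type*) [Group G] : Prop :=
  ∀ g : G, Finite (Abelianization (Subgroup.normalClosure ({g} : Set G)))

/-!
Let `A` be the C⋆-algebra generated by the `ζ`-twisted left regular representation `λ` on `ℓ²(Γ)`.
By Property (Fab), there are only countably many pairs `(x, χ)` with `x ≠ 1` and `χ` a `ζ`-twisted
character of the normal closure `N` of `x`. For each of them the set
`D = {χ n • 1 - λ n | n ∈ N}` has trivial left annihilator in `A`, because the infinite group `N`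
has no common eigenvector in `ℓ²(Γ)`. Hence every nonempty face of the state space of the kind
"states supported on the range of a nonzero `e ∈ A`" contains a smaller one whose states do not
vanish on the two-sided ideal generated by `D`. Intersecting a chain of such faces that takes care
of every pair yields a pure state. Its GNS representation is irreducible and does not kill any `D`
entirely, whereas a nontrivial element of the projective kernel would make it kill one.
-/

universe u

open scoped ComplexOrder CStarAlgebra InnerProductSpace

section ExtremePoints

theorem exists_mem_extremePoints_forall_mem {E ι : Type*} [AddCommGroup E] [Module ℝ E]
    [TopologicalSpace E] [T2Space E] [IsTopologicalAddGroup E] [ContinuousSMul ℝ E]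
    [LocallyConvexSpace ℝ E] [Countable ι] {S : Set E} {𝓕 : Set (Set E)} (h𝓕 : 𝓕.Nonempty)
    (hne : ∀ F ∈ 𝓕, F.Nonempty) (hcompact : ∀ F ∈ 𝓕, IsCompact F)
    (hextreme : ∀ F ∈ 𝓕, IsExtreme ℝ S F) {U : ι → Set E}
    (hU : ∀ i, ∀ F ∈ 𝓕, ∃ F' ∈ 𝓕, F' ⊆ F ∧ F' ⊆ U i) :
    ∃ x ∈ S.extremePoints ℝ, ∀ i, x ∈ U i := by
  have := Encodable.ofCountable ι
  obtain ⟨F₀, hF₀⟩ := h𝓕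
  let 𝒟 (i : ι) : Order.Cofinal 𝓕ᵒᵈ :=
    { carrier := {F | (OrderDual.ofDual F).1 ⊆ U i}
      isCofinal := fun F ↦
        let ⟨F', hF', hle, hsub⟩ := hU i _ (OrderDual.ofDual F).2
        ⟨OrderDual.toDual ⟨F', hF'⟩, hsub, hle⟩ }
  let J := Order.idealOfCofinals (OrderDual.toDual ⟨F₀, hF₀⟩) 𝒟
  let t (F : J) : Set E := (OrderDual.ofDual F.1).1
  have : Nonempty J := J.nonempty'.to_subtype
  have ht (F : J) : t F ∈ 𝓕 := (OrderDual.ofDual F.1).2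
  have hclosed (F : J) : IsClosed (t F) := (hcompact _ (ht F)).isClosed
  have hdirected : Directed (· ⊇ ·) t := J.directed'.directed_val
  have hinter : (⋂ F, t F).Nonempty :=
    IsCompact.nonempty_iInter_of_directed_nonempty_isCompact_isClosed t hdirected
      (fun F ↦ hne _ (ht F)) (fun F ↦ hcompact _ (ht F)) hclosed
  have hinter_compact : IsCompact (⋂ F, t F) :=
    (hcompact _ hF₀).of_isClosed_subset (isClosed_iInter hclosed)
      (Set.iInter_subset t ⟨_, Order.mem_idealOfCofinals _ 𝒟⟩)
  obtain ⟨x, hx⟩ := hinter_compact.extremePoints_nonempty hinter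
  refine ⟨x, (isExtreme_iInter fun F ↦ hextreme _ (ht F)).extremePoints_subset_extremePoints hx,
    fun i ↦ ?_⟩
  obtain ⟨F, hFU, hFJ⟩ := Order.cofinal_meets_idealOfCofinals (OrderDual.toDual ⟨F₀, hF₀⟩) 𝒟 i
  exact hFU (Set.mem_iInter.mp hx.1 ⟨F, hFJ⟩)

end ExtremePoints

section StateSpace

variable {A H : Type*} [CStarAlgebra A] [PartialOrder A] [StarOrderedRing A]
  [NormedAddCommGroup H] [InnerProductSpace ℂ H] [CompleteSpace H]

/-- The positive functional `a ↦ ⟪v, ρ a v⟫` attached to a vector `v` of a representation `ρ`. -/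
noncomputable def vectorFunctional (ρ : A →⋆ₐ[ℂ] (H →L[ℂ] H)) (v : H) : A →ₚ[ℂ] ℂ :=
  PositiveLinearMap.mk₀
    ((innerSL ℂ v).toLinearMap ∘ₗ (ContinuousLinearMap.apply ℂ H v).toLinearMap ∘ₗ
      ρ.toAlgHom.toLinearMap) fun a ha ↦ by
    obtain ⟨b, rfl⟩ := CStarAlgebra.nonneg_iff_eq_star_mul_self.mp ha
    change 0 ≤ ⟪v, ρ (star b * b) v⟫_ℂ
    rw [map_mul, map_star, ContinuousLinearMap.star_eq_adjoint, mul_apply_eq_comp,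
      ContinuousLinearMap.adjoint_inner_right, inner_self_eq_norm_sq_to_K]
    exact pow_nonneg (RCLike.ofReal_nonneg.mpr (norm_nonneg _)) 2

lemma vectorFunctional_apply (ρ : A →⋆ₐ[ℂ] (H →L[ℂ] H)) (v : H) (a : A) :
    vectorFunctional ρ v a = ⟪v, ρ a v⟫_ℂ := rfl

lemma vectorFunctional_one (ρ : A →⋆ₐ[ℂ] (H →L[ℂ] H)) (v : H) :
    vectorFunctional ρ v 1 = (‖v‖ : ℂ) ^ 2 := by
  rw [vectorFunctional_apply, map_one, one_apply_eq_self, inner_self_eq_norm_sq_to_K]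
  rfl

/-- The canonical cyclic vector of the GNS representation: the class of `1`. -/
noncomputable def gnsCyclicVector (f : A →ₚ[ℂ] ℂ) : f.GNS := (f.toPreGNS 1 : f.PreGNS)

lemma gnsStarAlgHom_gnsCyclicVector (f : A →ₚ[ℂ] ℂ) (a : A) :
    f.gnsStarAlgHom a (gnsCyclicVector f) = (f.toPreGNS a : f.PreGNS) := by
  simp [gnsCyclicVector]

lemma denseRange_gnsStarAlgHom_gnsCyclicVector (f : A →ₚ[ℂ] ℂ) :
    DenseRange fun a ↦ f.gnsStarAlgHom a (gnsCyclicVector f) := by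
  simp only [gnsStarAlgHom_gnsCyclicVector]
  exact UniformSpace.Completion.denseRange_coe.comp f.toPreGNS.surjective.denseRange
    (UniformSpace.Completion.continuous_coe _)

lemma vectorFunctional_gnsCyclicVector (f : A →ₚ[ℂ] ℂ) :
    vectorFunctional f.gnsStarAlgHom (gnsCyclicVector f) = f := by
  ext a
  rw [vectorFunctional_apply, gnsStarAlgHom_gnsCyclicVector, gnsCyclicVector,
    UniformSpace.Completion.inner_coe, PositiveLinearMap.preGNS_inner_def]
  simp

lemma norm_positiveFunctional_apply_le (f : A →ₚ[ℂ] ℂ) (a : A) : ‖f a‖ ≤ ‖f 1‖ * ‖a‖ := by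
  set ξ := gnsCyclicVector f
  rw [← vectorFunctional_gnsCyclicVector f, vectorFunctional_one, vectorFunctional_apply]
  calc ‖⟪ξ, f.gnsStarAlgHom a ξ⟫_ℂ‖ ≤ ‖ξ‖ * ‖f.gnsStarAlgHom a ξ‖ := norm_inner_le_norm _ _
    _ ≤ ‖ξ‖ * (‖a‖ * ‖ξ‖) := by
      gcongr
      exact (f.gnsStarAlgHom a).le_of_opNorm_le (NonUnitalStarAlgHom.norm_apply_le _ a) ξ
    _ = ‖(‖ξ‖ : ℂ) ^ 2‖ * ‖a‖ := by
      rw [norm_pow, Complex.norm_real, norm_norm]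
      ring

variable (A) in
/-- The states of a C⋆-algebra. They are regarded as mere functions, so that the weak-⋆ topology on
them is the topology of pointwise convergence. -/
def stateSpace : Set (A → ℂ) := (⇑) '' {f : A →ₚ[ℂ] ℂ | f 1 = 1}

lemma mem_stateSpace_iff {φ : A → ℂ} :
    φ ∈ stateSpace A ↔
      φ ∈ Set.range ((⇑) : (A →ₗ[ℂ] ℂ) → A → ℂ) ∧ (∀ a, 0 ≤ a → 0 ≤ φ a) ∧ φ 1 = 1 := by
  constructor
  · rintro ⟨f, hf, rfl⟩
    exact ⟨⟨f.toLinearMap, rfl⟩, fun a ha ↦ map_nonneg f ha, hf⟩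
  · rintro ⟨⟨f, rfl⟩, hpos, hone⟩
    exact ⟨PositiveLinearMap.mk₀ f hpos, hone, rfl⟩

lemma isCompact_stateSpace : IsCompact (stateSpace A) := by
  refine (isCompact_univ_pi fun a : A ↦ isCompact_closedBall (0 : ℂ) ‖a‖).of_isClosed_subset ?_ ?_
  · have : stateSpace A = Set.range ((⇑) : (A →ₗ[ℂ] ℂ) → A → ℂ) ∩
        (⋂ (a : A) (_ : 0 ≤ a), {φ | 0 ≤ φ a}) ∩ {φ | φ 1 = 1} := by
      ext φ
      simp only [mem_stateSpace_iff, Set.mem_inter_iff, Set.mem_iInter, Set.mem_ofPred_eq,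
        and_assoc]
    rw [this]
    refine ((LinearMap.isClosed_range_coe A ℂ (RingHom.id ℂ)).inter ?_).inter
      (isClosed_eq (continuous_apply 1) continuous_const)
    exact isClosed_biInter fun a _ ↦ isClosed_le continuous_const (continuous_apply a)
  · rintro _ ⟨f, hf, rfl⟩ a -
    simpa [hf.out] using norm_positiveFunctional_apply_le f a

lemma inv_smul_mem_stateSpace {f : A →ₚ[ℂ] ℂ} (hf : f 1 ≠ 0) : (f 1)⁻¹ • ⇑f ∈ stateSpace A := by
  refine mem_stateSpace_iff.mpr ⟨⟨(f 1)⁻¹ • f.toLinearMap, rfl⟩, fun a ha ↦ ?_, ?_⟩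
  · exact mul_nonneg (inv_nonneg.mpr (map_nonneg f zero_le_one)) (map_nonneg f ha)
  · exact inv_mul_cancel₀ hf

lemma apply_eq_apply_one_mul_of_mem_extremePoints {f g h : A →ₚ[ℂ] ℂ}
    (hf : ⇑f ∈ (stateSpace A).extremePoints ℝ) (hfgh : ∀ a, f a = g a + h a) (a : A) :
    g a = g 1 * f a := by
  have eq_zero_of_apply_one (k : A →ₚ[ℂ] ℂ) (hk : k 1 = 0) : k a = 0 := by
    simpa [hk] using norm_positiveFunctional_apply_le k a
  have hsum : g 1 + h 1 = 1 := by rw [← hfgh, (mem_stateSpace_iff.mp hf.1).2.2]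
  by_cases hg : g 1 = 0
  · rw [eq_zero_of_apply_one g hg, hg, zero_mul]
  by_cases hh : h 1 = 0
  · rw [hh, add_zero] at hsum
    rw [hfgh, eq_zero_of_apply_one h hh, hsum, add_zero, one_mul]
  have ofReal_re (k : A →ₚ[ℂ] ℂ) : ((k 1).re : ℂ) = k 1 :=
    (Complex.eq_re_of_ofReal_le (map_nonneg k zero_le_one)).symm
  have re_pos (k : A →ₚ[ℂ] ℂ) (hk : k 1 ≠ 0) : 0 < (k 1).re :=
    (Complex.pos_iff.mp ((map_nonneg k zero_le_one).lt_of_ne' hk)).1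
  have hseg : ⇑f ∈ openSegment ℝ ((g 1)⁻¹ • ⇑g) ((h 1)⁻¹ • ⇑h) := by
    refine ⟨(g 1).re, (h 1).re, re_pos g hg, re_pos h hh, by
      simpa using congrArg Complex.re hsum, funext fun b ↦ ?_⟩
    simp only [Pi.add_apply, Pi.smul_apply, Complex.real_smul, ofReal_re, smul_eq_mul,
      mul_inv_cancel_left₀ hg, mul_inv_cancel_left₀ hh, hfgh]
  have heq := hf.2 (inv_smul_mem_stateSpace hg) (inv_smul_mem_stateSpace hh) hseg
  rw [← heq, Pi.smul_apply, smul_eq_mul, mul_inv_cancel_left₀ hg]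

end StateSpace

section Irreducibility

variable {H : Type*} [NormedAddCommGroup H] [InnerProductSpace ℂ H]

lemma eq_bot_or_eq_top_of_starProjection_apply_eq_smul {K : Submodule ℂ H}
    [K.HasOrthogonalProjection] {c : ℂ} (hc : ∀ v, K.starProjection v = c • v) :
    K = ⊥ ∨ K = ⊤ := by
  rcases eq_or_ne c 0 with rfl | hc0
  · refine .inl (eq_bot_iff.mpr fun v hv ↦ ?_)
    rw [Submodule.mem_bot, ← K.starProjection_eq_self_iff.mpr hv, hc, zero_smul]
  · refine .inr (eq_top_iff.mpr fun v _ ↦ ?_)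
    rw [← inv_smul_smul₀ hc0 v, ← hc]
    exact K.smul_mem _ (K.starProjection_apply_mem v)

variable [CompleteSpace H]

lemma commute_starProjection_of_forall_mem {K : Submodule ℂ H} [K.HasOrthogonalProjection]
    {T : H →L[ℂ] H} (hT : ∀ v ∈ K, T v ∈ K) (hT' : ∀ v ∈ K, star T v ∈ K) :
    Commute K.starProjection T := by
  rw [ContinuousLinearMap.IsIdempotentElem.commute_iff K.isIdempotentElem_starProjection]
  refine ⟨?_, ?_⟩
  · rw [Submodule.range_starProjection]
    exact hT
  · rw [Submodule.ker_starProjection]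
    exact ContinuousLinearMap.orthogonal_mem_invtSubmodule hT'

variable {A : Type*} [CStarAlgebra A] [PartialOrder A] [StarOrderedRing A]

/-- The orthogonal projection `P` onto an invariant subspace splits `⟪ξ, ρ a ξ⟫` as
`⟪Pξ, ρ a Pξ⟫ + ⟪ξ - Pξ, ρ a (ξ - Pξ)⟫`, so extremality forces `⟪Pξ, ρ a ξ⟫ = c ⟪ξ, ρ a ξ⟫`. -/
theorem isIrreducibleRep_of_vectorFunctional_mem_extremePoints {ρ : A →⋆ₐ[ℂ] (H →L[ℂ] H)} {ξ : H}
    (hξ : DenseRange fun a ↦ ρ a ξ)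
    (hext : ⇑(vectorFunctional ρ ξ) ∈ (stateSpace A).extremePoints ℝ) : IsIrreducibleRep ρ := by
  intro K hK hinv
  have : CompleteSpace K := hK.completeSpace_coe
  set P := K.starProjection
  have hcomm (a : A) : P * ρ a = ρ a * P := by
    refine commute_starProjection_of_forall_mem (hinv a) ?_
    rw [← map_star]
    exact hinv (star a)
  have hP (v w : H) : ⟪P v, w⟫_ℂ = ⟪v, P w⟫_ℂ := K.inner_starProjection_left_eq_right v w
  have hPP (v : H) : P (P v) = P v := congrArg (· v) K.isIdempotentElem_starProjection.eq
  have hPa (a : A) (v : H) : ρ a (P v) = P (ρ a v) := (congrArg (· v) (hcomm a)).symm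
  have hsplit (a : A) : vectorFunctional ρ ξ a =
      vectorFunctional ρ (P ξ) a + vectorFunctional ρ (ξ - P ξ) a := by
    simp only [vectorFunctional_apply, map_sub, inner_sub_left, inner_sub_right, hPa, hP, hPP]
    ring
  set c := starRingEnd ℂ (vectorFunctional ρ (P ξ) 1)
  have hPξ : P ξ = c • ξ := by
    refine ext_inner_right ℂ (congrFun (hξ.equalizer (by fun_prop) (by fun_prop) ?_))
    funext a
    have h := apply_eq_apply_one_mul_of_mem_extremePoints hext hsplit a
    rw [vectorFunctional_apply, hPa, hP, hPP, ← hP, vectorFunctional_apply ρ ξ] at h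
    simpa only [Function.comp_apply, c, inner_smul_left, starRingEnd_self_apply] using h
  have hPc (v : H) : P v = c • v := by
    refine congrFun (hξ.equalizer P.continuous (continuous_const_smul c) ?_) v
    funext a
    simp only [Function.comp_apply, ← hPa, hPξ, map_smul]
  exact eq_bot_or_eq_top_of_starProjection_apply_eq_smul hPc

end Irreducibility

section SupportFace

variable {A : Type*} [CStarAlgebra A]

lemma mul_posPart_sub_one {b : A} (hb : IsSelfAdjoint b) :
    b * (b - 1)⁺ = (b - 1)⁺ * (b - 1)⁺ + (b - 1)⁺ := by
  have h := CFC.posPart_sub_negPart (b - 1) (hb.sub (.one A))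
  calc b * (b - 1)⁺ = ((b - 1)⁺ - (b - 1)⁻ + 1) * (b - 1)⁺ := by rw [h, sub_add_cancel]
    _ = (b - 1)⁺ * (b - 1)⁺ + (b - 1)⁺ := by
      rw [add_mul, sub_mul, CFC.negPart_mul_posPart, sub_zero, one_mul]

lemma negPart_sub_one_mul_mul_posPart_sub_one {b : A} (hb : IsSelfAdjoint b) :
    (b - 1)⁻ * (b * (b - 1)⁺) = 0 := by
  rw [mul_posPart_sub_one hb, mul_add, ← mul_assoc, CFC.negPart_mul_posPart, zero_mul, add_zero]

variable [PartialOrder A]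

/-- The states supported on the range of `e`: those vanishing on every positive `a` with
`a * e = 0`. These faces stand in for the spectral projections that `A` lacks. -/
def supportFace (e : A) : Set (A → ℂ) :=
  {φ ∈ stateSpace A | ∀ a, 0 ≤ a → a * e = 0 → φ a = 0}

lemma supportFace_mul_subset (e y : A) : supportFace (e * y) ⊆ supportFace e :=
  fun _ hφ ↦ ⟨hφ.1, fun a ha hae ↦ hφ.2 a ha (by rw [← mul_assoc, hae, zero_mul])⟩

variable [StarOrderedRing A]

lemma mul_posPart_sub_one_ne_zero {b : A} (hb : IsSelfAdjoint b) (hb1 : ¬ b ≤ 1) :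
    b * (b - 1)⁺ ≠ 0 := by
  have hp : 0 ≤ (b - 1)⁺ := CFC.posPart_nonneg _
  rw [mul_posPart_sub_one hb]
  intro h
  have hp0 := (add_eq_zero_iff_of_nonneg (hp.isSelfAdjoint.mul_self_nonneg) hp).mp h
  exact hb1 (sub_nonpos.mp ((CFC.posPart_eq_zero_iff _ (hb.sub (.one A))).mp hp0.2))

lemma one_le_negPart_sub_one_add {b : A} (hb : IsSelfAdjoint b) : 1 ≤ (b - 1)⁻ + b :=
  calc 1 ≤ (b - 1)⁺ + 1 := le_add_of_nonneg_left (CFC.posPart_nonneg _)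
    _ = (b - 1)⁻ + b := by
      rw [add_comm (b - 1)⁻, ← sub_eq_sub_iff_add_eq_add,
        CFC.posPart_sub_negPart (b - 1) (hb.sub (.one A))]

lemma exists_pos_not_smul_le_one {c : A} (hc : 0 ≤ c) (hc0 : c ≠ 0) :
    ∃ r : ℝ, 0 < r ∧ ¬ r • c ≤ 1 := by
  have hnorm : 0 < ‖c‖ := norm_pos_iff.mpr hc0
  refine ⟨2 / ‖c‖, by positivity, fun hle ↦ ?_⟩
  have h := (CStarAlgebra.norm_le_one_iff_of_nonneg _ (smul_nonneg (by positivity) hc)).mpr hle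
  rw [norm_smul, Real.norm_of_nonneg (by positivity), div_mul_cancel₀ _ hnorm.ne'] at h
  norm_num at h

lemma isCompact_supportFace (e : A) : IsCompact (supportFace e) := by
  have : supportFace e =
      stateSpace A ∩ ⋂ (a : A) (_ : 0 ≤ a) (_ : a * e = 0), {φ | φ a = 0} := by
    ext φ
    simp only [supportFace, Set.mem_ofPred_eq, Set.mem_inter_iff, Set.mem_iInter]
  rw [this]
  exact isCompact_stateSpace.inter_right <| isClosed_iInter fun a ↦ isClosed_iInter fun _ ↦
    isClosed_iInter fun _ ↦ isClosed_eq (continuous_apply a) continuous_const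

lemma isExtreme_supportFace (e : A) : IsExtreme ℝ (stateSpace A) (supportFace e) := by
  refine ⟨fun φ hφ ↦ hφ.1, ?_⟩
  rintro φ hφ ψ hψ _ hmem ⟨s, t, hs, ht, -, rfl⟩
  refine ⟨hφ, fun a ha hae ↦ ?_⟩
  have hφa := smul_nonneg hs.le ((mem_stateSpace_iff.mp hφ).2.1 a ha)
  have hψa := smul_nonneg ht.le ((mem_stateSpace_iff.mp hψ).2.1 a ha)
  exact (smul_eq_zero_iff_right hs.ne').mp
    ((add_eq_zero_iff_of_nonneg hφa hψa).mp (hmem.2 a ha hae)).1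

lemma nonempty_supportFace {H : Type*} [NormedAddCommGroup H] [InnerProductSpace ℂ H]
    [CompleteSpace H] {ρ : A →⋆ₐ[ℂ] (H →L[ℂ] H)} (hρ : Function.Injective ρ) {e : A} (he : e ≠ 0) :
    (supportFace e).Nonempty := by
  obtain ⟨w, hw⟩ : ∃ w, ρ e w ≠ 0 := by
    by_contra! h
    exact he ((map_eq_zero_iff ρ hρ).mp (ContinuousLinearMap.ext h))
  have hone : vectorFunctional ρ (ρ e w) 1 ≠ 0 := by
    rw [vectorFunctional_one]
    exact pow_ne_zero 2 (Complex.ofReal_ne_zero.mpr (norm_ne_zero_iff.mpr hw))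
  refine ⟨_, inv_smul_mem_stateSpace hone, fun a _ hae ↦ ?_⟩
  rw [Pi.smul_apply, vectorFunctional_apply _ _ a, ← mul_apply_eq_comp, ← map_mul, hae, map_zero,
    zero_apply, inner_zero_right, smul_zero]

lemma exists_supportFace_subset {e d : A} (hed : e * d ≠ 0) :
    ∃ e', e' ≠ 0 ∧ supportFace e' ⊆ supportFace e ∧
      ∃ x y, ∀ φ ∈ supportFace e', φ (x * d * y) ≠ 0 := by
  have hc : 0 ≤ e * d * star (e * d) := mul_star_self_nonneg _
  obtain ⟨r, hr, hr1⟩ :=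
    exists_pos_not_smul_le_one hc ((CStarRing.mul_star_self_eq_zero_iff _).not.mpr hed)
  set b := e * d * (r • star (e * d)) with hb
  rw [← mul_smul_comm, ← hb] at hr1
  have hsa : IsSelfAdjoint b := by
    rw [hb, mul_smul_comm]
    exact (smul_nonneg hr.le hc).isSelfAdjoint
  refine ⟨b * (b - 1)⁺, mul_posPart_sub_one_ne_zero hsa hr1, ?_, e, r • star (e * d), ?_⟩
  · rw [hb, mul_assoc e d, mul_assoc e]
    exact supportFace_mul_subset _ _
  · rintro _ ⟨⟨f, hf, rfl⟩, hsupp⟩ hfb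
    have hfn : f (b - 1)⁻ = 0 :=
      hsupp _ (CFC.negPart_nonneg _) (negPart_sub_one_mul_mul_posPart_sub_one hsa)
    have h1 : f 1 ≤ f ((b - 1)⁻ + b) := OrderHomClass.mono f (one_le_negPart_sub_one_add hsa)
    rw [hf.out, map_add, hfn, hfb, add_zero] at h1
    exact zero_lt_one.not_ge h1

end SupportFace

section IrreducibleRepresentation

theorem exists_isIrreducibleRep_forall_exists_apply_ne_zero {A : Type u} [CStarAlgebra A]
    [Nontrivial A] {H : Type*} [NormedAddCommGroup H] [InnerProductSpace ℂ H] [CompleteSpace H]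
    {ρ : A →⋆ₐ[ℂ] (H →L[ℂ] H)} (hρ : Function.Injective ρ) {ι : Type*} [Countable ι]
    {D : ι → Set A} (hD : ∀ i, ∀ e : A, e ≠ 0 → ∃ d ∈ D i, e * d ≠ 0) :
    ∃ (K : Type u) (_ : NormedAddCommGroup K) (_ : InnerProductSpace ℂ K) (_ : CompleteSpace K)
      (σ : A →⋆ₐ[ℂ] (K →L[ℂ] K)),
      Nontrivial K ∧ IsIrreducibleRep σ ∧ ∀ i, ∃ d ∈ D i, σ d ≠ 0 := by
  let _ : PartialOrder A := CStarAlgebra.spectralOrder A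
  have : StarOrderedRing A := CStarAlgebra.spectralOrderedRing A
  let U (i : ι) : Set (A → ℂ) := {φ | ∃ d ∈ D i, ∃ x y, φ (x * d * y) ≠ 0}
  obtain ⟨_, hext, hU⟩ : ∃ φ ∈ (stateSpace A).extremePoints ℝ, ∀ i, φ ∈ U i := by
    refine exists_mem_extremePoints_forall_mem (𝓕 := supportFace '' {e : A | e ≠ 0})
      ⟨_, 1, one_ne_zero, rfl⟩ ?_ ?_ ?_ ?_
    · exact Set.forall_mem_image.mpr fun e he ↦ nonempty_supportFace hρ he
    · exact Set.forall_mem_image.mpr fun e _ ↦ isCompact_supportFace e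
    · exact Set.forall_mem_image.mpr fun e _ ↦ isExtreme_supportFace e
    · rintro i _ ⟨e, he, rfl⟩
      obtain ⟨d, hd, hed⟩ := hD i e he
      obtain ⟨e', he', hsub, x, y, hxy⟩ := exists_supportFace_subset hed
      exact ⟨_, ⟨e', he', rfl⟩, hsub, fun φ hφ ↦ ⟨d, hd, x, y, hxy φ hφ⟩⟩
  obtain ⟨f, hf, rfl⟩ := hext.1
  have hfξ := vectorFunctional_gnsCyclicVector f
  refine ⟨f.GNS, inferInstance, inferInstance, inferInstance, f.gnsStarAlgHom, ?_, ?_, fun i ↦ ?_⟩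
  · refine ⟨gnsCyclicVector f, 0, fun hξ ↦ one_ne_zero (α := ℂ) ?_⟩
    rw [← hf.out, ← hfξ, hξ, vectorFunctional_apply, inner_zero_left]
  · exact isIrreducibleRep_of_vectorFunctional_mem_extremePoints
      (denseRange_gnsStarAlgHom_gnsCyclicVector f) (by rwa [hfξ])
  · obtain ⟨d, hd, x, y, hxy⟩ := hU i
    refine ⟨d, hd, fun hσd ↦ hxy ?_⟩
    rw [← hfξ, vectorFunctional_apply, map_mul, map_mul, hσd, mul_zero, zero_mul, zero_apply,
      inner_zero_right]

end IrreducibleRepresentation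

section TwistedCharacter

variable {N : Type*} [Group N]

/-- The characters of `N` twisted by `ω`, that is the one-dimensional projective representations
of `N` with multiplier `ω`. -/
def TwistedCharacter (ω : N → N → Circle) : Type _ :=
  {χ : N → Circle // ∀ m n, χ m * χ n = ω m n * χ (m * n)}

lemma finite_monoidHom_circle [Finite (Abelianization N)] : Finite (N →* Circle) := by
  have hinj : Function.Injective fun φ : Abelianization N →* Circle ↦ Circle.toUnits.comp φ :=
    fun φ ψ h ↦ MonoidHom.ext fun a ↦ Circle.ext (congrArg Units.val (DFunLike.congr_fun h a))
  have : Finite (Abelianization N →* Circle) := .of_injective _ hinj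
  exact .of_equiv _ Abelianization.lift.symm

instance finite_twistedCharacter [Finite (Abelianization N)] (ω : N → N → Circle) :
    Finite (TwistedCharacter ω) := by
  rcases isEmpty_or_nonempty (TwistedCharacter ω) with h | ⟨⟨χ₀⟩⟩
  · infer_instance
  have := finite_monoidHom_circle (N := N)
  have hmul (χ : TwistedCharacter ω) (m n : N) :
      χ.1 (m * n) / χ₀.1 (m * n) = χ.1 m / χ₀.1 m * (χ.1 n / χ₀.1 n) := by
    rw [div_mul_div_comm, χ.2, χ₀.2, mul_div_mul_left_eq_div]
  refine .of_injective (fun χ ↦ MonoidHom.mk' (fun n ↦ χ.1 n / χ₀.1 n) (hmul χ)) fun χ ψ h ↦ ?_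
  exact Subtype.ext (funext fun n ↦ div_left_injective (DFunLike.congr_fun h n))

end TwistedCharacter

section ProjectiveKernel

variable {G : Type*} [Group G] {H : Type*} [NormedAddCommGroup H] [InnerProductSpace ℂ H]
  [CompleteSpace H] {ζ : G → G → Circle} {π : G → (H →L[ℂ] H)}

lemma IsZetaRep.apply_mul (hπ : IsZetaRep ζ π) (x y : G) :
    π (x * y) = (ζ x y)⁻¹ • (π x * π y) := by
  rw [hπ.2.2, ← Circle.smul_def, inv_smul_smul]

lemma IsZetaRep.apply_mul_apply_inv (hπ : IsZetaRep ζ π) (x : G) :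
    π x * π x⁻¹ = ζ x x⁻¹ • (1 : H →L[ℂ] H) := by
  rw [hπ.2.2, mul_inv_cancel, hπ.2.1, Circle.smul_def]

lemma IsZetaRep.apply_inv (hπ : IsZetaRep ζ π) (x : G) : π x⁻¹ = ζ x x⁻¹ • star (π x) :=
  calc π x⁻¹ = star (π x) * (π x * π x⁻¹) := by
        rw [← mul_assoc, Unitary.star_mul_self_of_mem (hπ.1 x), one_mul]
    _ = ζ x x⁻¹ • star (π x) := by rw [hπ.apply_mul_apply_inv, mul_smul_comm, mul_one]

lemma IsZetaRep.star_apply (hπ : IsZetaRep ζ π) (x : G) :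
    star (π x) = (ζ x x⁻¹)⁻¹ • π x⁻¹ := by
  rw [hπ.apply_inv, inv_smul_smul]

/-- The projective kernel of a `ζ`-representation, as a subgroup. -/
def IsZetaRep.projKer (hπ : IsZetaRep ζ π) : Subgroup G where
  carrier := ProjKer π
  one_mem' := ⟨1, by rw [hπ.2.1, Circle.coe_one, one_smul]⟩
  mul_mem' := by
    rintro x y ⟨z, hz⟩ ⟨w, hw⟩
    refine ⟨(ζ x y)⁻¹ * (z * w), ?_⟩
    rw [← Circle.smul_def] at hz hw ⊢
    rw [hπ.apply_mul, hz, hw, smul_mul_smul_comm, one_mul, smul_smul]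
  inv_mem' := by
    rintro x ⟨z, hz⟩
    refine ⟨ζ x x⁻¹ * z⁻¹, ?_⟩
    rw [hπ.apply_inv, hz, star_smul, star_one, Circle.coe_mul, Circle.coe_inv_eq_conj, mul_smul,
      Circle.smul_def]
    rfl

lemma IsZetaRep.normal_projKer (hπ : IsZetaRep ζ π) : hπ.projKer.Normal where
  conj_mem := by
    rintro x ⟨z, hz⟩ g
    refine ⟨(ζ (g * x) g⁻¹)⁻¹ * (ζ g x)⁻¹ * z * ζ g g⁻¹, ?_⟩
    rw [← Circle.smul_def] at hz ⊢
    rw [hπ.apply_mul, hπ.apply_mul, hz, mul_smul_comm, mul_one, smul_mul_assoc, smul_mul_assoc,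
      hπ.apply_mul_apply_inv, smul_smul, smul_smul, smul_smul, mul_assoc, mul_assoc]

lemma IsZetaRep.exists_twistedCharacter [Nontrivial H] (hπ : IsZetaRep ζ π) {x : G}
    (hx : x ∈ ProjKer π) :
    ∃ χ : TwistedCharacter fun m n : Subgroup.normalClosure {x} ↦ ζ m n,
      ∀ n : Subgroup.normalClosure {x}, π n = (χ.1 n : ℂ) • (1 : H →L[ℂ] H) := by
  have := hπ.normal_projKer
  have hle : Subgroup.normalClosure {x} ≤ hπ.projKer :=
    Subgroup.normalClosure_le_normal (Set.singleton_subset_iff.mpr hx)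
  choose χ hχ using fun n : Subgroup.normalClosure {x} ↦ hle n.2
  refine ⟨⟨χ, fun m n ↦ Circle.ext ?_⟩, hχ⟩
  have h := hπ.2.2 m n
  rw [← Subgroup.coe_mul, hχ, hχ, hχ, smul_mul_smul_comm, one_mul, smul_smul] at h
  exact smul_left_injective ℂ one_ne_zero h

end ProjectiveKernel

section GeneratedCStarAlgebra

variable {B : Type*} [CStarAlgebra B]

/-- The unital C⋆-subalgebra generated by a set. -/
def generatedCStarAlgebra (s : Set B) : StarSubalgebra ℂ B :=
  (StarAlgebra.adjoin ℂ s).topologicalClosure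

instance isClosed_generatedCStarAlgebra (s : Set B) : IsClosed (generatedCStarAlgebra s : Set B) :=
  StarSubalgebra.isClosed_topologicalClosure _

lemma subset_generatedCStarAlgebra (s : Set B) : s ⊆ generatedCStarAlgebra s :=
  (StarAlgebra.subset_adjoin ℂ s).trans (StarSubalgebra.le_topologicalClosure _)

lemma generatedCStarAlgebra_le {s : Set B} {𝓑 : StarSubalgebra ℂ B} (hs : s ⊆ 𝓑)
    (h𝓑 : IsClosed (𝓑 : Set B)) : generatedCStarAlgebra s ≤ 𝓑 :=
  StarSubalgebra.topologicalClosure_minimal (StarAlgebra.adjoin_le hs) h𝓑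

lemma generatedCStarAlgebra_preimage_val (s : Set B) :
    generatedCStarAlgebra ((↑) ⁻¹' s : Set (generatedCStarAlgebra s)) = ⊤ := by
  set 𝓑 := generatedCStarAlgebra ((↑) ⁻¹' s : Set (generatedCStarAlgebra s))
  have hclosed : IsClosed (𝓑.map (generatedCStarAlgebra s).subtype : Set B) :=
    (isClosed_generatedCStarAlgebra s).isClosedEmbedding_subtypeVal.isClosedMap _
      (isClosed_generatedCStarAlgebra _)
  have hs : s ⊆ 𝓑.map (generatedCStarAlgebra s).subtype := fun b hb ↦
    ⟨⟨b, subset_generatedCStarAlgebra s hb⟩, subset_generatedCStarAlgebra _ hb, rfl⟩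
  refine eq_top_iff.mpr fun b _ ↦ ?_
  obtain ⟨b', hb', h⟩ := generatedCStarAlgebra_le hs hclosed b.2
  exact Subtype.ext h ▸ hb'

variable {H : Type*} [NormedAddCommGroup H] [InnerProductSpace ℂ H] [CompleteSpace H]

lemma isClosed_comap_centralizer (σ : B →⋆ₐ[ℂ] (H →L[ℂ] H)) (s : Set (H →L[ℂ] H)) :
    IsClosed ((StarSubalgebra.centralizer ℂ s).comap σ : Set B) :=
  (Set.isClosed_centralizer _).preimage (map_continuous σ)

lemma apply_mem_of_generatedCStarAlgebra_eq_top {s : Set B} (hs : generatedCStarAlgebra s = ⊤)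
    (σ : B →⋆ₐ[ℂ] (H →L[ℂ] H)) {K : Submodule ℂ H} [K.HasOrthogonalProjection]
    (hK : ∀ b ∈ s, ∀ v ∈ K, σ b v ∈ K) (hK' : ∀ b ∈ s, ∀ v ∈ K, star (σ b) v ∈ K) (a : B) {v : H}
    (hv : v ∈ K) : σ a v ∈ K := by
  have hle : s ⊆ (StarSubalgebra.centralizer ℂ {K.starProjection}).comap σ := by
    intro b hb
    have h := commute_starProjection_of_forall_mem (hK b hb) (hK' b hb)
    refine (StarSubalgebra.mem_centralizer_iff ℂ).mpr ?_
    rintro _ rfl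
    exact ⟨h, by rwa [(isSelfAdjoint_starProjection K).star_eq]⟩
  have ha : a ∈ (StarSubalgebra.centralizer ℂ {K.starProjection}).comap σ :=
    generatedCStarAlgebra_le hle (isClosed_comap_centralizer σ _) (hs ▸ StarSubalgebra.mem_top)
  have hcomm : K.starProjection * σ a = σ a * K.starProjection :=
    ((StarSubalgebra.mem_centralizer_iff ℂ).mp ha _ rfl).1
  rw [← K.starProjection_eq_self_iff.mpr hv, ← mul_apply_eq_comp, ← hcomm]
  exact K.starProjection_apply_mem _

end GeneratedCStarAlgebra

section IrreducibleZetaRep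

variable {G : Type*} [Group G] {H : Type*} [NormedAddCommGroup H] [InnerProductSpace ℂ H]
  [CompleteSpace H] {ζ : G → G → Circle} {π : G → (H →L[ℂ] H)}

/-- A map into a C⋆-algebra, regarded as a map into the C⋆-subalgebra generated by its range. -/
def toGeneratedCStarAlgebra {ι B : Type*} [CStarAlgebra B] (u : ι → B) (x : ι) :
    generatedCStarAlgebra (Set.range u) :=
  ⟨u x, subset_generatedCStarAlgebra _ ⟨x, rfl⟩⟩

lemma generatedCStarAlgebra_range_toGeneratedCStarAlgebra {ι B : Type*} [CStarAlgebra B]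
    (u : ι → B) : generatedCStarAlgebra (Set.range (toGeneratedCStarAlgebra u)) = ⊤ := by
  convert generatedCStarAlgebra_preimage_val (Set.range u)
  ext b
  simp only [toGeneratedCStarAlgebra, Set.mem_range, Set.mem_preimage, Subtype.ext_iff]

variable {K : Type*} [NormedAddCommGroup K] [InnerProductSpace ℂ K] [CompleteSpace K]

lemma IsZetaRep.comp_toGeneratedCStarAlgebra (hπ : IsZetaRep ζ π)
    (σ : generatedCStarAlgebra (Set.range π) →⋆ₐ[ℂ] (K →L[ℂ] K)) :
    IsZetaRep ζ fun x ↦ σ (toGeneratedCStarAlgebra π x) := by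
  refine ⟨fun x ↦ Unitary.map_mem σ ?_, ?_, fun x y ↦ ?_⟩
  · exact ⟨Subtype.ext (hπ.1 x).1, Subtype.ext (hπ.1 x).2⟩
  · have hone : toGeneratedCStarAlgebra π 1 = 1 := Subtype.ext hπ.2.1
    exact (congrArg σ hone).trans (map_one σ)
  · have hmul : toGeneratedCStarAlgebra π x * toGeneratedCStarAlgebra π y =
        (ζ x y : ℂ) • toGeneratedCStarAlgebra π (x * y) := Subtype.ext (hπ.2.2 x y)
    rw [← map_mul, hmul, map_smul]

lemma IsZetaRep.isIrreducibleRep_comp {A : Type*} [CStarAlgebra A] {u : G → A}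
    (hu : generatedCStarAlgebra (Set.range u) = ⊤) {σ : A →⋆ₐ[ℂ] (K →L[ℂ] K)}
    (hσu : IsZetaRep ζ fun x ↦ σ (u x)) (hσ : IsIrreducibleRep σ) :
    IsIrreducibleRep fun x ↦ σ (u x) := by
  intro M hM hinv
  have : CompleteSpace M := hM.completeSpace_coe
  refine hσ M hM fun a v hv ↦ apply_mem_of_generatedCStarAlgebra_eq_top hu σ ?_ ?_ a hv
  · exact Set.forall_mem_range.mpr hinv
  · refine Set.forall_mem_range.mpr fun x w hw ↦ ?_
    rw [hσu.star_apply x]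
    exact M.smul_mem _ (hinv x⁻¹ w hw)

theorem IsZetaRep.exists_irreducible_pFaithful {G : Type*} [Group G] [Countable G]
    (hFab : PropertyFab G) {H : Type u} [NormedAddCommGroup H] [InnerProductSpace ℂ H]
    [CompleteSpace H] [Nontrivial H] {ζ : G → G → Circle} {π : G → (H →L[ℂ] H)}
    (hπ : IsZetaRep ζ π)
    (hfree : ∀ x : G, x ≠ 1 → ∀ (χ : Subgroup.normalClosure {x} → Circle) (T : H →L[ℂ] H),
      (∀ n : Subgroup.normalClosure {x}, T * π n = (χ n : ℂ) • T) → T = 0) :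
    ∃ (K : Type u) (_ : NormedAddCommGroup K) (_ : InnerProductSpace ℂ K) (_ : CompleteSpace K)
      (σ : G → (K →L[ℂ] K)), IsZetaRep ζ σ ∧ IsIrreducibleRep σ ∧ PFaithful σ := by
  set A := generatedCStarAlgebra (Set.range π)
  set u : G → A := toGeneratedCStarAlgebra π
  let ι := Σ x : {x : G // x ≠ 1},
    TwistedCharacter fun m n : Subgroup.normalClosure {x.1} ↦ ζ m n
  have (x : {x : G // x ≠ 1}) : Finite (Abelianization (Subgroup.normalClosure {x.1})) := hFab x.1
  let D (i : ι) : Set A := Set.range fun n ↦ (i.2.1 n : ℂ) • (1 : A) - u n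
  have hD (i : ι) (e : A) (he : e ≠ 0) : ∃ d ∈ D i, e * d ≠ 0 := by
    by_contra! hcon
    refine he (Subtype.ext (hfree i.1.1 i.1.2 i.2.1 e fun n ↦ ?_))
    have h := hcon _ ⟨n, rfl⟩
    rw [mul_sub, mul_smul_comm, mul_one, sub_eq_zero] at h
    exact congrArg Subtype.val h.symm
  obtain ⟨K, _, _, _, σ, _, hσ, hσD⟩ :=
    exists_isIrreducibleRep_forall_exists_apply_ne_zero (ρ := A.subtype) Subtype.val_injective hD
  have hσu := hπ.comp_toGeneratedCStarAlgebra σ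
  refine ⟨K, _, _, _, _, hσu, hσu.isIrreducibleRep_comp
    (generatedCStarAlgebra_range_toGeneratedCStarAlgebra π) hσ, fun x hx ↦ ?_⟩
  by_contra hx1
  obtain ⟨χ, hχ⟩ := hσu.exists_twistedCharacter hx
  obtain ⟨_, ⟨n, rfl⟩, hd⟩ := hσD ⟨⟨x, hx1⟩, χ⟩
  exact hd (by rw [map_sub, map_smul, map_one, hχ n, sub_self])

end IrreducibleZetaRep

section TwistedRegular

variable {G : Type*} [Group G]

/-- The left regular representation twisted by `ζ`, as linear isometries of `ℓ²(G)`. -/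
noncomputable def twistedRegularIsometry (ζ : G → G → Circle) (x : G) :
    lp (fun _ : G ↦ ℂ) 2 →ₗᵢ[ℂ] lp (fun _ : G ↦ ℂ) 2 where
  toFun f := ⟨fun g ↦ (ζ x (x⁻¹ * g) : ℂ) * f (x⁻¹ * g), by
    refine memℓp_gen ?_
    simp only [norm_mul, Circle.norm_coe, one_mul]
    exact (Equiv.mulLeft x⁻¹).summable_iff.mpr ((lp.memℓp f).summable (by simp))⟩
  map_add' f g := by
    ext y
    exact mul_add _ _ _
  map_smul' c f := by
    ext y
    exact mul_left_comm _ _ _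
  norm_map' f := by
    rw [lp.norm_eq_tsum_rpow (by simp), lp.norm_eq_tsum_rpow (by simp),
      ← (Equiv.mulLeft x⁻¹).tsum_eq (fun g ↦ ‖f g‖ ^ _)]
    simp [Circle.norm_coe]

/-- The left regular representation twisted by `ζ`. -/
noncomputable def twistedRegular (ζ : G → G → Circle) (x : G) :
    lp (fun _ : G ↦ ℂ) 2 →L[ℂ] lp (fun _ : G ↦ ℂ) 2 :=
  (twistedRegularIsometry ζ x).toContinuousLinearMap

lemma twistedRegular_apply (ζ : G → G → Circle) (x : G) (f : lp (fun _ : G ↦ ℂ) 2) (g : G) :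
    twistedRegular ζ x f g = ζ x (x⁻¹ * g) * f (x⁻¹ * g) := rfl

variable {ζ : G → G → Circle}

lemma star_twistedRegular_mul_self (x : G) : star (twistedRegular ζ x) * twistedRegular ζ x = 1 :=
  (ContinuousLinearMap.norm_map_iff_adjoint_comp_self _).mp (twistedRegularIsometry ζ x).norm_map

lemma twistedRegular_one (hζ : IsMultiplier ζ) : twistedRegular ζ 1 = 1 := by
  ext f g
  rw [twistedRegular_apply, hζ.1, inv_one, one_mul, Circle.coe_one, one_mul, one_apply_eq_self]

lemma twistedRegular_mul (hζ : IsMultiplier ζ) (x y : G) :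
    twistedRegular ζ x * twistedRegular ζ y = (ζ x y : ℂ) • twistedRegular ζ (x * y) := by
  ext f g
  have hcocycle := congrArg ((↑) : Circle → ℂ) (hζ.2.2 x y ((x * y)⁻¹ * g))
  have hx : y * ((x * y)⁻¹ * g) = x⁻¹ * g := by group
  have hxy : y⁻¹ * (x⁻¹ * g) = (x * y)⁻¹ * g := by group
  rw [hx, Circle.coe_mul, Circle.coe_mul] at hcocycle
  simp only [mul_apply_eq_comp, twistedRegular_apply, smul_apply, lp.coeFn_smul, Pi.smul_apply,
    smul_eq_mul, hxy]
  rw [← mul_assoc, ← mul_assoc, hcocycle]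

lemma isZetaRep_twistedRegular (hζ : IsMultiplier ζ) : IsZetaRep ζ (twistedRegular ζ) := by
  refine ⟨fun x ↦ ⟨star_twistedRegular_mul_self x, ?_⟩, twistedRegular_one hζ,
    twistedRegular_mul hζ⟩
  have hinv : twistedRegular ζ x * ((ζ x x⁻¹)⁻¹ • twistedRegular ζ x⁻¹) = 1 := by
    rw [mul_smul_comm, twistedRegular_mul hζ, mul_inv_cancel, twistedRegular_one hζ,
      ← Circle.smul_def, inv_smul_smul]
  rw [left_inv_eq_right_inv (star_twistedRegular_mul_self x) hinv, hinv]

lemma eq_zero_of_forall_norm_mul_left_eq {E : Type*} [NormedAddCommGroup E] {p : ENNReal}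
    (hp : 0 < p.toReal) {N : Subgroup G} [Infinite N] {v : lp (fun _ : G ↦ E) p}
    (hv : ∀ (n : N) (g : G), ‖v (n * g)‖ = ‖v g‖) : v = 0 := by
  ext g
  have hsum : Summable fun _ : N ↦ ‖v g‖ ^ p.toReal := by
    have h := ((lp.memℓp v).summable hp).comp_injective
      ((mul_left_injective g).comp (Subtype.val_injective (p := (· ∈ N))))
    simpa only [Function.comp_def, hv] using h
  have hzero := (Real.rpow_eq_zero (norm_nonneg _) hp.ne').mp ((summable_const_iff _).mp hsum)
  exact norm_eq_zero.mp hzero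

lemma eq_zero_of_mul_twistedRegular_eq_smul (hζ : IsMultiplier ζ) {N : Subgroup G} [Infinite N]
    {χ : N → Circle} {T : lp (fun _ : G ↦ ℂ) 2 →L[ℂ] lp (fun _ : G ↦ ℂ) 2}
    (hT : ∀ n : N, T * twistedRegular ζ n = (χ n : ℂ) • T) : T = 0 := by
  have hstar (n : N) : twistedRegular ζ n * star T = (χ n : ℂ) • star T := by
    have hadj : star (twistedRegular ζ n) * star T = (χ n)⁻¹ • star T := by
      rw [← star_mul, hT, star_smul, Circle.smul_def, Circle.coe_inv_eq_conj]
      rfl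
    have hunit := Unitary.mul_star_self_of_mem ((isZetaRep_twistedRegular hζ).1 (n : G))
    rw [← Circle.smul_def, ← inv_smul_eq_iff, ← mul_smul_comm, ← hadj, ← mul_assoc, hunit, one_mul]
  refine star_eq_zero.mp (ContinuousLinearMap.ext fun v ↦ ?_)
  refine eq_zero_of_forall_norm_mul_left_eq (N := N) (by simp) fun n g ↦ ?_
  have h := congrArg (fun S ↦ ‖S v (n * g)‖) (hstar n)
  simpa [twistedRegular_apply, Circle.norm_coe] using h.symm

instance nontrivial_lp {ι : Type*} [Nonempty ι] : Nontrivial (lp (fun _ : ι ↦ ℂ) 2) := by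
  classical
  obtain ⟨i⟩ := ‹Nonempty ι›
  refine ⟨lp.single 2 i (1 : ℂ), 0, fun h ↦ one_ne_zero (α := ℂ) ?_⟩
  simpa using congrArg (fun v ↦ v i) h

end TwistedRegular

section InfiniteNormalClosure

variable {G : Type*} [Group G]

lemma infinite_normalClosure_of_forall_pow_ne_one {x : G} (hx : ∀ n : ℕ, 0 < n → x ^ n ≠ 1) :
    Infinite (Subgroup.normalClosure {x}) := by
  have hfin : ¬ IsOfFinOrder x := by
    simpa only [isOfFinOrder_iff_pow_eq_one, not_exists, not_and] using hx
  have hle : Subgroup.zpowers x ≤ Subgroup.normalClosure {x} :=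
    Subgroup.zpowers_le.mpr (Subgroup.subset_normalClosure rfl)
  exact Set.infinite_coe_iff.mpr ((infinite_zpowers.mpr hfin).mono hle)

lemma infinite_normalClosure_of_infinite_isConj {x : G} (hx : {y | IsConj x y}.Infinite) :
    Infinite (Subgroup.normalClosure {x}) :=
  Set.infinite_coe_iff.mpr <| hx.mono fun _ hy ↦ Subgroup.conjugatesOfSet_subset_normalClosure
    (Group.mem_conjugatesOfSet_iff.mpr ⟨x, rfl, hy⟩)

end InfiniteNormalClosure

theorem stmt_17_general {Γ : Type u} [Group Γ] [Countable Γ] (hFab : PropertyFab Γ)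
    (hinf : ∀ x : Γ, x ≠ 1 → Infinite (Subgroup.normalClosure {x}))
    {ζ : Γ → Γ → Circle} (hζ : IsMultiplier ζ) :
    ∃ (H : Type u) (_ : NormedAddCommGroup H) (_ : InnerProductSpace ℂ H) (_ : CompleteSpace H)
      (π : Γ → (H →L[ℂ] H)),
      IsZetaRep ζ π ∧ IsIrreducibleRep π ∧ PFaithful π :=
  (isZetaRep_twistedRegular hζ).exists_irreducible_pFaithful hFab fun x hx _ _ hT ↦
    have := hinf x hx
    eq_zero_of_mul_twistedRegular_eq_smul hζ hT

/-- A countable group with Property (Fab) which is torsion-free or icc has, for every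
normalised multiplier ζ, an irreducible projectively faithful ζ-representation. -/
theorem stmt_17 (Γ : Type) [Group Γ] [Countable Γ] (hFab : PropertyFab Γ)
    (hcase : (∀ g : Γ, g ≠ 1 → ∀ n : ℕ, 0 < n → g ^ n ≠ 1) ∨
      (Nontrivial Γ ∧ ∀ g : Γ, g ≠ 1 → {h : Γ | IsConj g h}.Infinite))
    (ζ : Γ → Γ → Circle) (hζ : IsMultiplier ζ) (hnorm : IsNormalised ζ) :
    ∃ (H : Type) (_ : NormedAddCommGroup H) (_ : InnerProductSpace ℂ H) (_ : CompleteSpace H)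
      (π : Γ → (H →L[ℂ] H)),
      IsZetaRep ζ π ∧ IsIrreducibleRep π ∧ PFaithful π :=
  stmt_17_general hFab (fun _ hx ↦ hcase.elim
    (infinite_normalClosure_of_forall_pow_ne_one <| · _ hx)
    (infinite_normalClosure_of_infinite_isConj <| ·.2 _ hx)) hζ
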